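/- For any sequence D = (D_n)_{n=1}^∞ of nonempty open subsets of [0,1] forming a base for the topology of [0,1], the space X_D = (C[0,1], ‖·‖_D) is midpoint locally uniformly rotund, has the diameter 2 property, and has the local diameter 2 property +. -/

import Mathlib

open Set Filter Topology

/-- The `n`-th seminorm: `‖x‖ₙ = sup_{d ∈ Dₙ} |x d|`. -/
noncomputable def seminormD (D : ℕ → Set (Icc (0:ℝ) 1)) (n : ℕ)
    (x : C(Icc (0:ℝ) 1, ℝ)) : ℝ :=
  ⨆ d : D n, |x d|

/-- The norm `‖x‖_D = (Σₙ 2⁻ⁿ ‖x‖ₙ²)^{1/2}` (indexing the sequence from `0`,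
with weight `2^{-(n+1)}`). -/
noncomputable def normD (D : ℕ → Set (Icc (0:ℝ) 1)) (x : C(Icc (0:ℝ) 1, ℝ)) : ℝ :=
  Real.sqrt (∑' n : ℕ, (1 / 2 : ℝ) ^ (n + 1) * (seminormD D n x) ^ 2)

/-- `f` is a norm-one linear functional on `X_D = (C[0,1], ‖·‖_D)`. -/
def DualNormOneD (D : ℕ → Set (Icc (0:ℝ) 1)) (f : C(Icc (0:ℝ) 1, ℝ) →ₗ[ℝ] ℝ) : Prop :=
  (∀ x, |f x| ≤ normD D x) ∧ ∀ c : ℝ, c < 1 → ∃ x, normD D x ≤ 1 ∧ c < |f x|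

/-- The weak topology of `X_D = (C[0,1], ‖·‖_D)`: the topology induced by all
`‖·‖_D`-bounded linear functionals. -/
noncomputable def weakTopD (D : ℕ → Set (Icc (0:ℝ) 1)) :
    TopologicalSpace C(Icc (0:ℝ) 1, ℝ) :=
  ⨅ f : {f : C(Icc (0:ℝ) 1, ℝ) →ₗ[ℝ] ℝ // ∃ c : ℝ, ∀ x, |f x| ≤ c * normD D x},
    TopologicalSpace.induced (fun x => f.1 x) inferInstance

lemma aux_bdd (D : ℕ → Set (Icc (0:ℝ) 1)) (n : ℕ) (x : C(Icc (0:ℝ) 1, ℝ)) :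
    BddAbove (Set.range fun d : D n => |x d|) :=
  ⟨‖x‖, by rintro _ ⟨d, rfl⟩; exact x.norm_coe_le_norm d⟩

lemma q_ge (D : ℕ → Set (Icc (0:ℝ) 1)) (n : ℕ) (x : C(Icc (0:ℝ) 1, ℝ)) {d : Icc (0:ℝ) 1}
    (hd : d ∈ D n) : |x d| ≤ seminormD D n x :=
  le_ciSup (aux_bdd D n x) (⟨d, hd⟩ : D n)

lemma q_le (D : ℕ → Set (Icc (0:ℝ) 1)) (n : ℕ) (x : C(Icc (0:ℝ) 1, ℝ)) {r : ℝ} (hr : 0 ≤ r)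
    (h : ∀ d ∈ D n, |x d| ≤ r) : seminormD D n x ≤ r :=
  Real.iSup_le (fun d => h d d.2) hr

lemma q_nonneg (D : ℕ → Set (Icc (0:ℝ) 1)) (n : ℕ) (x : C(Icc (0:ℝ) 1, ℝ)) :
    0 ≤ seminormD D n x := Real.iSup_nonneg fun _ => abs_nonneg _

lemma q_le_norm (D : ℕ → Set (Icc (0:ℝ) 1)) (n : ℕ) (x : C(Icc (0:ℝ) 1, ℝ)) :
    seminormD D n x ≤ ‖x‖ :=
  q_le D n x (norm_nonneg _) fun d _ => x.norm_coe_le_norm d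

lemma q_add (D : ℕ → Set (Icc (0:ℝ) 1)) (n : ℕ) (x y : C(Icc (0:ℝ) 1, ℝ)) :
    seminormD D n (x + y) ≤ seminormD D n x + seminormD D n y :=
  q_le D n _ (add_nonneg (q_nonneg _ _ _) (q_nonneg _ _ _)) fun d hd =>
    (abs_add_le (x d) (y d)).trans (add_le_add (q_ge D n x hd) (q_ge D n y hd))

lemma q_smul (D : ℕ → Set (Icc (0:ℝ) 1)) (n : ℕ) (c : ℝ) (x : C(Icc (0:ℝ) 1, ℝ)) :
    seminormD D n (c • x) = |c| * seminormD D n x := by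
  unfold seminormD
  rw [Real.mul_iSup_of_nonneg (abs_nonneg c)]
  simp [abs_mul]

lemma w_hasSum : HasSum (fun n : ℕ => (1 / 2 : ℝ) ^ (n + 1)) 1 := by
  have := (hasSum_geometric_two).mul_left (1/2 : ℝ)
  have e : (fun n : ℕ => (1 / 2 : ℝ) ^ (n + 1)) = fun n => 1 / 2 * (1 / 2 : ℝ) ^ n := by
    funext n; rw [pow_succ']
  have e1 : (1 / 2 : ℝ) * 2 = 1 := by norm_num
  rw [e1] at this
  rw [e]; exact this

lemma S_summable (D : ℕ → Set (Icc (0:ℝ) 1)) (x : C(Icc (0:ℝ) 1, ℝ)) :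
    Summable fun n : ℕ => (1 / 2 : ℝ) ^ (n + 1) * (seminormD D n x) ^ 2 := by
  refine Summable.of_nonneg_of_le (fun n => by positivity) (fun n => ?_)
    (w_hasSum.summable.mul_right (‖x‖ ^ 2))
  have := q_nonneg D n x
  have := q_le_norm D n x
  gcongr

lemma N_nonneg (D : ℕ → Set (Icc (0:ℝ) 1)) (x : C(Icc (0:ℝ) 1, ℝ)) : 0 ≤ normD D x :=
  Real.sqrt_nonneg _

lemma N_sq (D : ℕ → Set (Icc (0:ℝ) 1)) (x : C(Icc (0:ℝ) 1, ℝ)) :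
    normD D x ^ 2 = ∑' n : ℕ, (1 / 2 : ℝ) ^ (n + 1) * (seminormD D n x) ^ 2 :=
  Real.sq_sqrt (tsum_nonneg fun n => by positivity)

lemma N_mono (D : ℕ → Set (Icc (0:ℝ) 1)) (x y : C(Icc (0:ℝ) 1, ℝ)) (h : ∀ t, |x t| ≤ |y t|) :
    normD D x ≤ normD D y := by
  apply Real.sqrt_le_sqrt
  refine (S_summable D x).tsum_le_tsum (fun n => ?_) (S_summable D y)
  have h0 := q_nonneg D n x
  have : seminormD D n x ≤ seminormD D n y :=
    q_le D n x (q_nonneg D n y) fun d hd => (h d).trans (q_ge D n y hd)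
  gcongr

lemma N_le_norm (D : ℕ → Set (Icc (0:ℝ) 1)) (x : C(Icc (0:ℝ) 1, ℝ)) : normD D x ≤ ‖x‖ := by
  apply Real.sqrt_le_iff.2 ⟨norm_nonneg _, ?_⟩
  have h := w_hasSum.mul_right (‖x‖ ^ 2)
  rw [one_mul] at h
  rw [← h.tsum_eq]
  refine (S_summable D x).tsum_le_tsum (fun n => ?_) h.summable
  have := q_nonneg D n x
  have := q_le_norm D n x
  gcongr

lemma N_smul (D : ℕ → Set (Icc (0:ℝ) 1)) (c : ℝ) (x : C(Icc (0:ℝ) 1, ℝ)) :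
    normD D (c • x) = |c| * normD D x := by
  refine (sq_eq_sq₀ (N_nonneg D _) (mul_nonneg (abs_nonneg c) (N_nonneg D _))).1 ?_
  rw [mul_pow, N_sq, N_sq, ← tsum_mul_left]
  refine tsum_congr fun n => ?_
  rw [q_smul]; ring

lemma N_add (D : ℕ → Set (Icc (0:ℝ) 1)) (x y : C(Icc (0:ℝ) 1, ℝ)) :
    normD D (x + y) ≤ normD D x + normD D y := by
  have key : ∀ z : C(Icc (0:ℝ) 1, ℝ), ∀ n, (√((1 / 2 : ℝ) ^ (n + 1)) * seminormD D n z) ^ (2:ℝ)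
      = (1 / 2 : ℝ) ^ (n + 1) * (seminormD D n z) ^ 2 := by
    intro z n
    rw [Real.rpow_two, mul_pow, Real.sq_sqrt (by positivity)]
  have h := Real.Lp_add_le_tsum_of_nonneg (p := 2) (by norm_num)
    (f := fun n : ℕ => √((1 / 2 : ℝ) ^ (n + 1)) * seminormD D n x)
    (g := fun n : ℕ => √((1 / 2 : ℝ) ^ (n + 1)) * seminormD D n y)
    (fun n => mul_nonneg (Real.sqrt_nonneg _) (q_nonneg _ _ _))
    (fun n => mul_nonneg (Real.sqrt_nonneg _) (q_nonneg _ _ _))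
    (by simpa only [key] using S_summable D x) (by simpa only [key] using S_summable D y)
  obtain ⟨hs, h⟩ := h
  simp only [key] at h
  simp only [← Real.sqrt_eq_rpow] at h
  refine le_trans ?_ h
  apply Real.sqrt_le_sqrt
  refine (S_summable D _).tsum_le_tsum (fun n => ?_) hs
  rw [← mul_add, Real.rpow_two, mul_pow, Real.sq_sqrt (by positivity)]
  have := q_add D n x y
  have := q_nonneg D n (x + y)
  gcongr

lemma N_neg (D : ℕ → Set (Icc (0:ℝ) 1)) (x : C(Icc (0:ℝ) 1, ℝ)) : normD D (-x) = normD D x := by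
  simpa using N_smul D (-1) x

lemma N_sub (D : ℕ → Set (Icc (0:ℝ) 1)) (x y : C(Icc (0:ℝ) 1, ℝ)) :
    normD D (x - y) ≤ normD D x + normD D y := by
  rw [sub_eq_add_neg, ← N_neg D y]; exact N_add D _ _

lemma N_cont (D : ℕ → Set (Icc (0:ℝ) 1)) : Continuous (normD D) := by
  refine (LipschitzWith.of_le_add (f := normD D) fun x y => ?_).continuous
  calc normD D x = normD D (y + (x - y)) := by congr 1; abel
    _ ≤ normD D y + normD D (x - y) := N_add D _ _
    _ ≤ normD D y + dist x y := by rw [dist_eq_norm]; gcongr; exact N_le_norm D _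

/-- bounded functionals kill disjointly supported bounded sequences -/
lemma disj_tendsto (D : ℕ → Set (Icc (0:ℝ) 1)) (f : C(Icc (0:ℝ) 1, ℝ) →ₗ[ℝ] ℝ) (c : ℝ)
    (hf : ∀ x, |f x| ≤ c * normD D x) (u : ℕ → C(Icc (0:ℝ) 1, ℝ)) (M : ℝ)
    (hM : ∀ k t, |u k t| ≤ M) (hd : ∀ k l, k ≠ l → ∀ t, u k t = 0 ∨ u l t = 0) :
    Tendsto (fun k => f (u k)) atTop (𝓝 0) := by
  have hM0 : 0 ≤ M := (abs_nonneg _).trans (hM 0 ⟨0, by simp⟩)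
  have hs : Summable fun k => |f (u k)| := by
    refine summable_of_sum_le (c := |c| * M) (fun k => abs_nonneg _) fun F => ?_
    have e : ∑ k ∈ F, |f (u k)| = f (∑ k ∈ F, (SignType.sign (f (u k)) : ℝ) • u k) := by
      rw [map_sum]
      refine Finset.sum_congr rfl fun k _ => ?_
      rw [map_smul, smul_eq_mul, sign_mul_self]
    rw [e]
    refine (le_abs_self _).trans ((hf _).trans ?_)
    have hn : normD D (∑ k ∈ F, (SignType.sign (f (u k)) : ℝ) • u k) ≤ M := by
      refine (N_le_norm D _).trans ((ContinuousMap.norm_le _ hM0).2 fun t => ?_)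
      rw [ContinuousMap.sum_apply]
      have hterm : ∀ k, ‖((SignType.sign (f (u k)) : ℝ) • u k) t‖ ≤ M := by
        intro k
        rw [ContinuousMap.smul_apply, norm_smul]
        have : ‖(SignType.sign (f (u k)) : ℝ)‖ ≤ 1 := by
          rcases SignType.sign (f (u k)) with _ | _ | _ <;> simp
        calc _ ≤ 1 * ‖u k t‖ := by gcongr
          _ ≤ M := by rw [one_mul]; exact hM k t
      by_cases h : ∃ k ∈ F, u k t ≠ 0
      · obtain ⟨k, hk, hkt⟩ := h
        rw [Finset.sum_eq_single k]
        · exact hterm k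
        · intro l _ hlk
          have := (hd l k hlk t).resolve_right hkt
          simp [this]
        · intro h; exact absurd hk h
      · push Not at h
        rw [Finset.sum_eq_zero]
        · simpa using hM0
        · intro k hk; simp [h k hk]
    have := N_nonneg D (∑ k ∈ F, (SignType.sign (f (u k)) : ℝ) • u k)
    exact (mul_le_mul_of_nonneg_right (le_abs_self c) this).trans (by gcongr)
  have := hs.tendsto_atTop_zero
  exact (tendsto_zero_iff_abs_tendsto_zero _).2 this

/-- a nonempty open subset of `[0,1]` contains a nontrivial interval -/
lemma open_interval (U : Set (Icc (0:ℝ) 1)) (hU : IsOpen U) (hne : U.Nonempty) :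
    ∃ a b : ℝ, a < b ∧ ∀ t, a ≤ t → t ≤ b → ∃ h : t ∈ Icc (0:ℝ) 1, (⟨t, h⟩ : Icc (0:ℝ) 1) ∈ U := by
  obtain ⟨⟨p, hp0, hp1⟩, hp⟩ := hne
  obtain ⟨r, hr, hball⟩ := Metric.isOpen_iff.1 hU _ hp
  refine ⟨max 0 (p - r/2), min 1 (p + r/2), ?_, ?_⟩
  · apply max_lt <;> apply lt_min <;> linarith
  · intro t ht1 ht2
    obtain ⟨h1, h2⟩ := max_le_iff.1 ht1
    obtain ⟨h3, h4⟩ := le_min_iff.1 ht2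
    refine ⟨⟨h1, h3⟩, hball ?_⟩
    rw [Metric.mem_ball, Subtype.dist_eq, Real.dist_eq, abs_lt]
    constructor <;> simp <;> linarith

lemma bumps (U : ℕ → Set (Icc (0:ℝ) 1)) (hU : ∀ n, IsOpen (U n)) (hne : ∀ n, (U n).Nonempty)
    (m : ℕ) : ∃ φ : ℕ → C(Icc (0:ℝ) 1, ℝ), (∀ k t, 0 ≤ φ k t ∧ φ k t ≤ 1) ∧
      (∀ k l, k ≠ l → ∀ t, φ k t = 0 ∨ φ l t = 0) ∧ ∀ k, ∀ n < m, ∃ d ∈ U n, φ k d = 1 := by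
  choose a b hab h using fun n => open_interval (U n) (hU n) (hne n)
  obtain ⟨M, hM0, hM⟩ : ∃ M : ℝ, 0 < M ∧ ∀ n < m, 2 * Real.pi ≤ M * (b n - a n) := by
    refine ⟨∑ n ∈ Finset.range m, 2 * Real.pi / (b n - a n) + 1, ?_, ?_⟩
    · have : 0 ≤ ∑ n ∈ Finset.range m, 2 * Real.pi / (b n - a n) :=
        Finset.sum_nonneg fun n _ => div_nonneg Real.two_pi_pos.le (sub_pos.2 (hab n)).le
      linarith
    · intro n hn
      have := Finset.single_le_sum (s := Finset.range m) (f := fun n => 2 * Real.pi / (b n - a n))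
        (fun n _ => div_nonneg Real.two_pi_pos.le (sub_pos.2 (hab n)).le) (Finset.mem_range.2 hn)
      rw [← div_le_iff₀ (sub_pos.2 (hab n))]
      linarith
  let φ : ℕ → C(Icc (0:ℝ) 1, ℝ) := fun k =>
    ⟨fun t => max 0 (1 - 4 * |2 ^ k * Real.sin (M * t) - 1|), by fun_prop⟩
  have hφ : ∀ k t, φ k t = max 0 (1 - 4 * |2 ^ k * Real.sin (M * t) - 1|) := fun _ _ => rfl
  have hlt : ∀ k l, k < l → ∀ t, φ k t = 0 ∨ φ l t = 0 := by
    intro k l hkl t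
    by_contra! hc
    have hpos : ∀ j, φ j t ≠ 0 → 3/4 < 2 ^ j * Real.sin (M * t) ∧
        2 ^ j * Real.sin (M * t) < 5/4 := by
      intro j hj
      rw [hφ] at hj
      have h1 : 0 < 1 - 4 * |2 ^ j * Real.sin (M * t) - 1| := by
        by_contra! hh
        exact hj (max_eq_left hh)
      have h2 : |2 ^ j * Real.sin (M * t) - 1| < 1/4 := by linarith
      rw [abs_lt] at h2
      constructor <;> linarith [h2.1, h2.2]
    obtain ⟨k1, k2⟩ := hpos k hc.1
    obtain ⟨l1, l2⟩ := hpos l hc.2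
    obtain ⟨e, rfl⟩ := Nat.exists_eq_add_of_lt hkl
    have he : (1:ℝ) ≤ 2 ^ e := one_le_pow₀ (by norm_num)
    have : (2:ℝ) ^ (k + e + 1) * Real.sin (M * t) = 2 ^ e * (2 * (2 ^ k * Real.sin (M * t))) := by
      ring
    nlinarith
  refine ⟨φ, ?_, ?_, ?_⟩
  · intro k t
    rw [hφ]
    refine ⟨le_max_left _ _, max_le zero_le_one ?_⟩
    have := abs_nonneg (2 ^ k * Real.sin (M * t) - 1)
    linarith
  · intro k l hkl t
    rcases hkl.lt_or_gt with h | h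
    · exact hlt k l h t
    · exact (hlt l k h t).symm
  · intro k n hn
    have hs1 : ((2:ℝ)^k)⁻¹ ≤ 1 := inv_le_one_of_one_le₀ (one_le_pow₀ (by norm_num))
    have hs0 : 0 < ((2:ℝ)^k)⁻¹ := by positivity
    obtain ⟨s, ⟨hsa, hsb⟩, hs⟩ := Real.sin_periodic.exists_mem_Ico Real.two_pi_pos
      (Real.arcsin ((2:ℝ)^k)⁻¹) (M * a n)
    rw [Real.sin_arcsin (by linarith) hs1] at hs
    have := hM n hn
    obtain ⟨hm, hmU⟩ := h n (s / M) ((le_div_iff₀ hM0).2 (by linarith))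
      ((div_le_iff₀ hM0).2 (by linarith))
    refine ⟨_, hmU, ?_⟩
    rw [hφ]
    have e : M * (s / M) = s := by field_simp
    simp only [e, ← hs]
    simp

lemma weak_tendsto (D : ℕ → Set (Icc (0:ℝ) 1)) (V : Set C(Icc (0:ℝ) 1, ℝ))
    (hV : IsOpen[weakTopD D] V) (x : C(Icc (0:ℝ) 1, ℝ)) (hx : x ∈ V) (u : ℕ → C(Icc (0:ℝ) 1, ℝ))
    (hu : ∀ f : C(Icc (0:ℝ) 1, ℝ) →ₗ[ℝ] ℝ, (∃ c : ℝ, ∀ x, |f x| ≤ c * normD D x) →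
      Tendsto (fun k => f (u k)) atTop (𝓝 0)) : ∀ᶠ k in atTop, x + u k ∈ V := by
  have h1 : V ∈ @nhds _ (weakTopD D) x := @IsOpen.mem_nhds _ (weakTopD D) _ _ hV hx
  have h2 : Tendsto (fun k => x + u k) atTop (@nhds _ (weakTopD D) x) := by
    unfold weakTopD
    rw [nhds_iInf, tendsto_iInf]
    rintro ⟨f, hf⟩
    rw [nhds_induced, tendsto_comap_iff]
    have := (hu f hf).const_add (f x)
    simpa [Function.comp_def] using this
  exact h2 h1

lemma flipSeq (D : ℕ → Set (Icc (0:ℝ) 1))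
    (hDopen : ∀ n, IsOpen (D n)) (hDne : ∀ n, (D n).Nonempty)
    (x : C(Icc (0:ℝ) 1, ℝ)) (hx : normD D x = 1) (δ : ℝ) (hδ : 0 < δ) :
    ∃ u : ℕ → C(Icc (0:ℝ) 1, ℝ), (∀ k, normD D (x + u k) ≤ 1) ∧
      (∀ k, normD D (u k) > 2 - δ) ∧
      ∀ f : C(Icc (0:ℝ) 1, ℝ) →ₗ[ℝ] ℝ, (∃ c : ℝ, ∀ x, |f x| ≤ c * normD D x) →
      Tendsto (fun k => f (u k)) atTop (𝓝 0) := by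
  obtain ⟨c, hc0, hc1, hcδ⟩ : ∃ c : ℝ, 0 < c ∧ c < 1 ∧ 2 - δ < 2 * c ^ 2 := by
    have h1 : min (δ/8) (1/2) ≤ δ/8 := min_le_left _ _
    have h2 : min (δ/8) (1/2) ≤ 1/2 := min_le_right _ _
    have h3 : 0 < min (δ/8) (1/2) := lt_min (by linarith) (by norm_num)
    exact ⟨1 - min (δ/8) (1/2), by linarith, by linarith, by nlinarith⟩
  have hU : ∀ n, ∃ U ⊆ D n, IsOpen U ∧ U.Nonempty ∧ ∀ d ∈ U, c * seminormD D n x ≤ |x d| := by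
    intro n
    rcases (q_nonneg D n x).eq_or_lt with h | h
    · exact ⟨D n, Subset.rfl, hDopen n, hDne n, fun d _ => by rw [← h]; simp⟩
    · refine ⟨D n ∩ {d | c * seminormD D n x < |x d|}, inter_subset_left,
        (hDopen n).inter (isOpen_lt continuous_const (by fun_prop)), ?_, fun d hd => hd.2.le⟩
      by_contra hemp
      have hq : seminormD D n x ≤ c * seminormD D n x :=
        q_le D n x (by positivity) fun d hd => by
          by_contra! hh
          exact hemp ⟨d, hd, hh⟩
      nlinarith
  choose U hUD hUo hUne hUx using hU
  obtain ⟨m, hm⟩ : ∃ m, c ^ 2 <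
      ∑ n ∈ Finset.range m, (1 / 2 : ℝ) ^ (n + 1) * (seminormD D n x) ^ 2 := by
    have ht := (S_summable D x).hasSum.tendsto_sum_nat
    rw [← N_sq, hx] at ht
    exact (ht.eventually_const_lt (by nlinarith)).exists
  obtain ⟨φ, hφ, hdisj, hone⟩ := bumps U hUo hUne m
  refine ⟨fun k => (-2 : ℝ) • (x * φ k), fun k => ?_, fun k => ?_, ?_⟩
  · refine le_trans (N_mono D _ x ?_) hx.le
    intro t
    obtain ⟨h0, h1⟩ := hφ k t
    have : (x + (-2 : ℝ) • (x * φ k)) t = x t * (1 - 2 * φ k t) := by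
      simp; ring
    rw [this, abs_mul]
    have : |1 - 2 * φ k t| ≤ 1 := abs_le.2 ⟨by linarith, by linarith⟩
    exact mul_le_of_le_one_right (abs_nonneg _) this
  · rw [N_smul]
    have h2 : |(-2:ℝ)| = 2 := by norm_num
    rw [h2]
    suffices c ^ 2 ≤ normD D (x * φ k) by linarith
    apply Real.le_sqrt_of_sq_le
    refine le_trans ?_ ((S_summable D (x * φ k)).sum_le_tsum (Finset.range m)
      (fun n _ => by positivity))
    calc (c ^ 2) ^ 2 ≤ c ^ 2 *
          ∑ n ∈ Finset.range m, (1 / 2 : ℝ) ^ (n + 1) * (seminormD D n x) ^ 2 := by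
          rw [sq (c^2)]; gcongr
      _ = ∑ n ∈ Finset.range m, (1 / 2 : ℝ) ^ (n + 1) * (c * seminormD D n x) ^ 2 := by
          rw [Finset.mul_sum]; exact Finset.sum_congr rfl fun n _ => by ring
      _ ≤ _ := by
          refine Finset.sum_le_sum fun n hn => ?_
          obtain ⟨d, hd, hd1⟩ := hone k n (Finset.mem_range.1 hn)
          have h3 : c * seminormD D n x ≤ seminormD D n (x * φ k) := by
            refine (hUx n d hd).trans ?_
            have := q_ge D n (x * φ k) (hUD n hd)
            simpa [hd1] using this
          have := mul_nonneg hc0.le (q_nonneg D n x)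
          gcongr
  · rintro f ⟨C, hf⟩
    refine disj_tendsto D f C hf _ (2 * ‖x‖) ?_ ?_
    · intro k t
      obtain ⟨h0, h1⟩ := hφ k t
      have hx := x.norm_coe_le_norm t
      rw [Real.norm_eq_abs] at hx
      simp only [ContinuousMap.smul_apply, ContinuousMap.mul_apply, smul_eq_mul, abs_mul,
        abs_of_nonneg h0]
      have : |(-2:ℝ)| = 2 := by norm_num
      rw [this]
      have := mul_le_mul hx h1 h0 (norm_nonneg x)
      linarith
    · intro k l hkl t
      rcases hdisj k l hkl t with h | h <;> simp [h]

lemma to_sphere (D : ℕ → Set (Icc (0:ℝ) 1))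
    (hDopen : ∀ n, IsOpen (D n)) (hDne : ∀ n, (D n).Nonempty)
    (x : C(Icc (0:ℝ) 1, ℝ)) (hx : normD D x ≤ 1) :
    ∃ u : ℕ → C(Icc (0:ℝ) 1, ℝ), (∀ k, normD D (x + u k) = 1) ∧
      ∀ f : C(Icc (0:ℝ) 1, ℝ) →ₗ[ℝ] ℝ, (∃ c : ℝ, ∀ x, |f x| ≤ c * normD D x) →
      Tendsto (fun k => f (u k)) atTop (𝓝 0) := by
  obtain ⟨φ, hφ, hdisj, hone⟩ := bumps D hDopen hDne 1
  have hN : ∀ k, 1 / 2 ≤ normD D (φ k) := by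
    intro k
    apply Real.le_sqrt_of_sq_le
    refine le_trans ?_ ((S_summable D (φ k)).le_tsum 0 (fun n _ => by positivity))
    obtain ⟨d, hd, hd1⟩ := hone k 0 one_pos
    have := q_ge D 0 (φ k) hd
    rw [hd1, abs_one] at this
    norm_num
    nlinarith
  have ht : ∀ k, ∃ t ∈ Icc (0:ℝ) 4, normD D (x + t • φ k) = 1 := by
    intro k
    have hcont : Continuous fun t : ℝ => normD D (x + t • φ k) :=
      (N_cont D).comp (by fun_prop)
    refine intermediate_value_Icc (by norm_num) hcont.continuousOn ⟨by simpa using hx, ?_⟩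
    have h1 : normD D ((4:ℝ) • φ k) ≤ normD D (x + (4:ℝ) • φ k) + normD D x := by
      have := N_sub D (x + (4:ℝ) • φ k) x
      rwa [add_sub_cancel_left] at this
    rw [N_smul, abs_of_pos (by norm_num : (0:ℝ) < 4)] at h1
    show 1 ≤ normD D (x + (4:ℝ) • φ k)
    linarith [hN k]
  choose t ht h1 using ht
  refine ⟨fun k => t k • φ k, h1, ?_⟩
  rintro f ⟨C, hf⟩
  refine disj_tendsto D f C hf _ 4 ?_ ?_
  · intro k s
    obtain ⟨h0, h1⟩ := hφ k s
    simp only [ContinuousMap.smul_apply, smul_eq_mul, abs_mul, abs_of_nonneg h0,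
      abs_of_nonneg (ht k).1]
    have := mul_le_mul (ht k).2 h1 h0 (by norm_num)
    linarith
  · intro k l hkl s
    rcases hdisj k l hkl s with h | h <;> simp [h]

lemma mlur_q (D : ℕ → Set (Icc (0:ℝ) 1)) (x : C(Icc (0:ℝ) 1, ℝ)) (hx : normD D x = 1)
    (y : ℕ → C(Icc (0:ℝ) 1, ℝ))
    (h1 : Tendsto (fun k => normD D (x + y k)) atTop (𝓝 1))
    (h2 : Tendsto (fun k => normD D (x - y k)) atTop (𝓝 1)) (n : ℕ) (η : ℝ) (hη : 0 < η) :
    ∀ᶠ k in atTop, seminormD D n (x + y k) < seminormD D n x + η ∧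
      seminormD D n (x - y k) < seminormD D n x + η := by
  have hq : ∀ n k, 2 * seminormD D n x ≤ seminormD D n (x + y k) + seminormD D n (x - y k) := by
    intro n k
    have := q_add D n (x + y k) (x - y k)
    have e : x + y k + (x - y k) = (2:ℝ) • x := by rw [two_smul]; abel
    rwa [e, q_smul, abs_two] at this
  have hT : Tendsto (fun k => normD D (x + y k) ^ 2 + normD D (x - y k) ^ 2
      - 2 * normD D x ^ 2) atTop (𝓝 0) := by
    have := ((h1.pow 2).add (h2.pow 2)).sub_const (2 * normD D x ^ 2)
    rw [hx] at this ⊢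
    norm_num at this ⊢
    exact this
  have hw : (0:ℝ) < (1/2) ^ (n + 1) := by positivity
  have hb : 0 < (1/2:ℝ) ^ (n + 1) * (η ^ 2 / 2) := by positivity
  filter_upwards [hT.eventually_lt_const hb] with k hk
  have hle : (1/2:ℝ) ^ (n + 1) * (seminormD D n (x + y k) ^ 2 + seminormD D n (x - y k) ^ 2
      - 2 * seminormD D n x ^ 2) ≤ normD D (x + y k) ^ 2 + normD D (x - y k) ^ 2
      - 2 * normD D x ^ 2 := by
    have hs := (((S_summable D (x + y k)).hasSum.add (S_summable D (x - y k)).hasSum).sub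
      ((S_summable D x).hasSum.mul_left 2))
    rw [← N_sq, ← N_sq, ← N_sq] at hs
    have := le_hasSum hs n (fun j _ => ?_)
    · linarith
    · have h3 := hq j k
      have h4 := q_nonneg D j x
      have hwj : (0:ℝ) < (1/2) ^ (j + 1) := by positivity
      have : 0 ≤ seminormD D j (x + y k) ^ 2 + seminormD D j (x - y k) ^ 2
          - 2 * seminormD D j x ^ 2 := by
        nlinarith [sq_nonneg (seminormD D j (x + y k) - seminormD D j (x - y k))]
      have := mul_nonneg hwj.le this
      linarith
  have hlt := lt_of_mul_lt_mul_left (hle.trans_lt hk) hw.le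
  have h3 := hq n k
  have h4 := q_nonneg D n x
  have h5 := q_nonneg D n (x + y k)
  have h6 := q_nonneg D n (x - y k)
  -- with `a, b` the two seminorms, `a² + b² - 2q² < η²/2`
  have gen : ∀ a b q : ℝ, 0 ≤ q → 0 ≤ b → 2 * q ≤ a + b → a ^ 2 + b ^ 2 - 2 * q ^ 2 < η ^ 2 / 2 →
      a < q + η := by
    intro a b q hq hb hab hl
    by_contra! hc
    rcases le_total q η with hqe | hqe
    · nlinarith [sq_nonneg b]
    · nlinarith [sq_nonneg (a - b), sq_nonneg (a - q - η), sq_nonneg (a + b - 2 * q)]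
  exact ⟨gen _ _ _ h4 h6 h3 hlt, gen _ _ _ h4 h5 (by linarith) (by linarith)⟩

lemma mlur (D : ℕ → Set (Icc (0:ℝ) 1))
    (hbasis : TopologicalSpace.IsTopologicalBasis (Set.range D))
    (x : C(Icc (0:ℝ) 1, ℝ)) (hx : normD D x = 1) (y : ℕ → C(Icc (0:ℝ) 1, ℝ))
    (h1 : Tendsto (fun k => normD D (x + y k)) atTop (𝓝 1))
    (h2 : Tendsto (fun k => normD D (x - y k)) atTop (𝓝 1)) :
    Tendsto (fun k => normD D (y k)) atTop (𝓝 0) := by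
  suffices h : Tendsto (fun k => ‖y k‖) atTop (𝓝 0) from
    squeeze_zero (fun k => N_nonneg D _) (fun k => N_le_norm D _) h
  rw [Metric.tendsto_atTop']
  intro ε hε
  have hloc : ∀ t : Icc (0:ℝ) 1, ∃ n, t ∈ D n ∧ ∀ d ∈ D n, |x d - x t| < ε / 8 := by
    intro t
    have ho : IsOpen {d | |x d - x t| < ε / 8} := isOpen_lt (by fun_prop) continuous_const
    obtain ⟨_, ⟨n, rfl⟩, htn, hsub⟩ := hbasis.exists_subset_of_mem_open
      (show t ∈ {d | |x d - x t| < ε / 8} by simp; positivity) ho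
    exact ⟨n, htn, fun d hd => hsub hd⟩
  choose n hn hxn using hloc
  obtain ⟨F, hF⟩ := isCompact_univ.elim_finite_subcover (fun t => D (n t))
    (fun t => hbasis.isOpen ⟨_, rfl⟩) (fun t _ => mem_iUnion.2 ⟨t, hn t⟩)
  have hev : ∀ᶠ k in atTop, ∀ t ∈ F, seminormD D (n t) (x + y k) < seminormD D (n t) x + ε / 8 ∧
      seminormD D (n t) (x - y k) < seminormD D (n t) x + ε / 8 :=
    (Filter.eventually_all_finset F).2 fun t _ => mlur_q D x hx y h1 h2 (n t) _ (by positivity)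
  obtain ⟨K, hK⟩ := eventually_atTop.1 hev
  refine ⟨K, fun k hk => ?_⟩
  rw [Real.dist_eq, sub_zero, abs_of_nonneg (norm_nonneg _)]
  refine lt_of_le_of_lt ((ContinuousMap.norm_le _ (by positivity : 0 ≤ ε/2)).2 fun d => ?_)
    (half_lt_self hε)
  obtain ⟨t, ht, hd⟩ := mem_iUnion₂.1 (hF (mem_univ d))
  obtain ⟨ha, hb⟩ := hK k hk.le t ht
  have hq : seminormD D (n t) x ≤ |x t| + ε / 8 := by
    refine q_le D _ x (by positivity) fun e he => ?_
    have := hxn t e he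
    have := abs_sub_abs_le_abs_sub (x e) (x t)
    linarith
  have hxd := hxn t d hd
  have h3 : |x d + y k d| ≤ _ := q_ge D (n t) (x + y k) hd
  have h4 : |x d - y k d| ≤ _ := q_ge D (n t) (x - y k) hd
  have h5 := abs_sub_abs_le_abs_sub (x t) (x d)
  rw [abs_sub_comm] at h5
  rw [Real.norm_eq_abs]
  have h6 : |x d| + |y k d| ≤ |x t| + ε / 4 := by
    obtain ⟨p1, p2⟩ := abs_le.1 h3
    obtain ⟨p3, p4⟩ := abs_le.1 h4
    rcases abs_cases (x d) with ⟨e1, _⟩ | ⟨e1, _⟩ <;> rcases abs_cases (y k d) with ⟨e2, _⟩ | ⟨e2, _⟩ <;>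
      rw [e1, e2] <;> linarith
  linarith

/-- For any base `D` of nonempty open sets of `[0,1]`, the space `X_D = (C[0,1], ‖·‖_D)`
is MLUR, has the diameter 2 property and has the local diameter 2 property +. -/
theorem normD_MLUR_D2P_LD2P_plus (D : ℕ → Set (Icc (0:ℝ) 1))
    (hDopen : ∀ n, IsOpen (D n)) (hDne : ∀ n, (D n).Nonempty)
    (hbasis : TopologicalSpace.IsTopologicalBasis (Set.range D)) :
    -- MLUR
    (∀ x : C(Icc (0:ℝ) 1, ℝ), normD D x = 1 →
      ∀ y : ℕ → C(Icc (0:ℝ) 1, ℝ),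
        Tendsto (fun k => normD D (x + y k)) atTop (𝓝 1) →
        Tendsto (fun k => normD D (x - y k)) atTop (𝓝 1) →
        Tendsto (fun k => normD D (y k)) atTop (𝓝 0)) ∧
    -- D2P: every nonempty relatively weakly open subset of the unit ball has diameter 2
    (∀ W : Set C(Icc (0:ℝ) 1, ℝ), W.Nonempty →
      (∃ V : Set C(Icc (0:ℝ) 1, ℝ), IsOpen[weakTopD D] V ∧
        W = V ∩ {x | normD D x ≤ 1}) →
      sSup {r : ℝ | ∃ a ∈ W, ∃ b ∈ W, r = normD D (a - b)} = 2) ∧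
    -- LD2P+
    (∀ f : C(Icc (0:ℝ) 1, ℝ) →ₗ[ℝ] ℝ, DualNormOneD D f →
      ∀ ε : ℝ, 0 < ε → ∀ δ : ℝ, 0 < δ →
        ∀ x : C(Icc (0:ℝ) 1, ℝ), normD D x ≤ 1 → f x > 1 - ε → normD D x = 1 →
          ∃ y : C(Icc (0:ℝ) 1, ℝ), normD D y ≤ 1 ∧ f y > 1 - ε ∧
            normD D (x - y) > 2 - δ) := by
  refine ⟨fun x hx y h1 h2 => mlur D hbasis x hx y h1 h2, ?_, ?_⟩
  · rintro W ⟨x₀, hx₀⟩ ⟨V, hV, rfl⟩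
    obtain ⟨hx₀V, hx₀1⟩ := hx₀
    obtain ⟨v, hv1, hv⟩ := to_sphere D hDopen hDne x₀ hx₀1
    obtain ⟨j, hj⟩ := (weak_tendsto D V hV x₀ hx₀V v hv).exists
    have hx1 := hv1 j
    generalize x₀ + v j = x at hj hx1
    apply csSup_eq_of_forall_le_of_forall_lt_exists_gt
    · exact ⟨_, x, ⟨hj, hx1.le⟩, x, ⟨hj, hx1.le⟩, rfl⟩
    · rintro _ ⟨a, ⟨_, ha⟩, b, ⟨_, hb⟩, rfl⟩
      have := N_sub D a b
      simp only [mem_ofPred_eq] at ha hb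
      linarith
    · intro r hr
      obtain ⟨u, hu1, hu2, hu⟩ := flipSeq D hDopen hDne x hx1 (2 - r) (by linarith)
      obtain ⟨k, hk⟩ := (weak_tendsto D V hV x hj u hu).exists
      refine ⟨_, ⟨x + u k, ⟨hk, hu1 k⟩, x, ⟨hj, hx1.le⟩, rfl⟩, ?_⟩
      rw [add_sub_cancel_left]
      linarith [hu2 k]
  · intro f hf ε hε δ hδ x _ hfx hx1
    obtain ⟨u, hu1, hu2, hu⟩ := flipSeq D hDopen hDne x hx1 δ hδ
    have ht := (hu f ⟨1, fun x => by simpa using hf.1 x⟩).const_add (f x)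
    rw [add_zero] at ht
    obtain ⟨k, hk⟩ := (ht.eventually_const_lt hfx).exists
    refine ⟨x + u k, hu1 k, by rw [map_add]; exact hk, ?_⟩
    have e : x - (x + u k) = -u k := by abel
    rw [e, N_neg]
    exact hu2 k
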